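/- Let q be a prime power, d an even positive integer, and k, n1, n2, t integers with k ≥ d, n1 ≥ k, n2 ≥ k, and 0 ≤ t ≤ n1 − k. Then A_q(n1 + n2, d, k) ≥ q^{n1·(k − d/2 + 1)} · A_q(n2, d, k) + A_q(n1 − t, d, k) · (1 + Σ_{r=d/2}^{k−d/2} A_r), where A_r = [k choose r]_q · Σ_{i=0}^{r−d/2} (−1)^i · q^{i(i−1)/2} · [r choose i]_q · (q^{(n2+t)·(r − d/2 + 1 − i)} − 1) is the number of codewords of rank r in a linear MRD code in F_q^{k×(n2+t)} with minimum rank distance d/2. -/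

import Mathlib

open Module

/-- The subspace distance `d_S(U, W) = dim(U + W) − dim(U ∩ W)`. -/
noncomputable def subspaceDist {F : Type*} [Field F] {n : ℕ}
    (U W : Submodule F (Fin n → F)) : ℕ :=
  finrank F ↥(U ⊔ W) - finrank F ↥(U ⊓ W)

/-- `A_q(n, d, k)`: the maximum size of an `(n, M, d, k)_q` constant dimension code, i.e.
of a set of `k`-dimensional subspaces of `F_q^n` with pairwise subspace distance
at least `d`. -/
noncomputable def maxCDCSize (F : Type*) [Field F] [Fintype F] (n d k : ℕ) : ℕ :=
  sSup {M | ∃ C : Finset (Submodule F (Fin n → F)), C.card = M ∧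
    (∀ U ∈ C, finrank F ↥U = k) ∧
    ∀ U ∈ C, ∀ W ∈ C, U ≠ W → d ≤ subspaceDist U W}

/-- The Gaussian binomial coefficient
`[a choose b]_q = ∏_{j=0}^{b−1} (q^{a−j} − 1)/(q^{b−j} − 1)` for `0 ≤ b ≤ a`,
and `0` otherwise. -/
noncomputable def gaussBinom (q : ℚ) (a b : ℕ) : ℚ :=
  if b ≤ a then ∏ j ∈ Finset.range b, (q ^ (a - j) - 1) / (q ^ (b - j) - 1) else 0

/-!
A `k`-dimensional subspace is the range of an injective linear map from `F^k`. Split the ambient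
space as `X × Y × Z` with dimensions `n1 - t`, `t`, `n2`. Pairing the maps of an optimal code in `Z`
with all codewords `F^k → X × Y` of an MRD code, and the maps of an optimal code in `X` with the
codewords `F^k → Y × Z` of rank at most `k - d/2` of a second MRD code, gives two constant dimension
codes. The projection to `Z` is injective on codewords of the first and has a kernel of dimension
at least `d/2` on codewords of the second, so their union still has minimum distance `d`.

The low-rank codewords are counted by Möbius inversion over the lattice of possible kernels: in an
MRD code, the number of codewords vanishing on a subspace `S` depends only on `dim S`, because
restriction to `S` is surjective or injective. MRD codes exist, as Gabidulin codes: a nonzero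
`q`-linearized polynomial of `q`-degree less than `κ` has fewer than `q^κ` roots.
-/

lemma ncard_eq_sum_ncard_fiberwise {α β : Type*} {s : Set α} (hs : s.Finite) {t : Finset β}
    {f : α → β} (h : Set.MapsTo f s t) : s.ncard = ∑ b ∈ t, {a ∈ s | f a = b}.ncard := by
  classical
  lift s to Finset α using hs
  rw [Set.ncard_coe_finset, Finset.card_eq_sum_card_fiberwise h]
  refine Finset.sum_congr rfl fun b _ => ?_
  rw [← Set.ncard_coe_finset, Finset.coe_filter]
  rfl

/-! ### Gaussian binomial coefficients -/

/-- The `q`-factorial, in the normalisation `(q - 1)(q² - 1)⋯(qⁿ - 1)`, i.e. not divided by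
`(q - 1)ⁿ`; Gaussian binomial coefficients are quotients of `q`-factorials. -/
def qFactorial (q : ℚ) (n : ℕ) : ℚ :=
  ∏ j ∈ Finset.range n, (q ^ (j + 1) - 1)

/-- The value `(-1)^i q^{i(i-1)/2}` of the Möbius function of the lattice of subspaces on intervals
of length `i`; see `sum_gaussMoebius_interval`. -/
def gaussMoebius (q : ℚ) (i : ℕ) : ℚ :=
  (-1) ^ i * q ^ (i * (i - 1) / 2)

section GaussBinom

variable {q : ℚ} {a b n : ℕ}

lemma qFactorial_zero (q : ℚ) : qFactorial q 0 = 1 :=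
  Finset.prod_range_zero _

lemma qFactorial_succ (q : ℚ) (n : ℕ) :
    qFactorial q (n + 1) = qFactorial q n * (q ^ (n + 1) - 1) :=
  Finset.prod_range_succ _ n

lemma qFactorial_ne_zero (hq : 1 < q) (n : ℕ) : qFactorial q n ≠ 0 :=
  Finset.prod_ne_zero_iff.2 fun j _ => (sub_pos.2 (one_lt_pow₀ hq j.succ_ne_zero)).ne'

lemma qFactorial_eq_prod_mul (q : ℚ) (h : b ≤ a) :
    qFactorial q a = (∏ j ∈ Finset.range b, (q ^ (a - j) - 1)) * qFactorial q (a - b) := by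
  induction b with
  | zero => simp
  | succ b ih =>
    rw [ih (by lia), Finset.prod_range_succ, show a - b = a - (b + 1) + 1 by lia, qFactorial_succ]
    ring

lemma gaussBinom_eq_zero (h : a < b) : gaussBinom q a b = 0 :=
  if_neg h.not_ge

lemma gaussBinom_zero_right (q : ℚ) (a : ℕ) : gaussBinom q a 0 = 1 := by
  simp [gaussBinom]

lemma gaussBinom_eq_qFactorial_div (hq : 1 < q) (h : b ≤ a) :
    gaussBinom q a b = qFactorial q a / (qFactorial q b * qFactorial q (a - b)) := by
  have hb : qFactorial q b = ∏ j ∈ Finset.range b, (q ^ (b - j) - 1) := by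
    simpa [qFactorial] using qFactorial_eq_prod_mul q le_rfl (b := b)
  rw [gaussBinom, if_pos h, Finset.prod_div_distrib, ← hb, qFactorial_eq_prod_mul q h,
    mul_div_mul_right _ _ (qFactorial_ne_zero hq _)]

lemma gaussBinom_self (hq : 1 < q) (a : ℕ) : gaussBinom q a a = 1 := by
  rw [gaussBinom_eq_qFactorial_div hq le_rfl, Nat.sub_self, qFactorial_zero, mul_one,
    div_self (qFactorial_ne_zero hq a)]

lemma gaussBinom_symm (hq : 1 < q) (h : b ≤ a) : gaussBinom q a (a - b) = gaussBinom q a b := by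
  rw [gaussBinom_eq_qFactorial_div hq h, gaussBinom_eq_qFactorial_div hq (a.sub_le b),
    Nat.sub_sub_self h, mul_comm (qFactorial q b)]

lemma gaussBinom_succ_succ (hq : 1 < q) (a b : ℕ) :
    gaussBinom q (a + 1) (b + 1) = gaussBinom q a b + q ^ (b + 1) * gaussBinom q a (b + 1) := by
  rcases lt_trichotomy a b with h | rfl | h
  · simp [gaussBinom_eq_zero, h, Nat.lt_succ_of_lt h]
  · simp [gaussBinom_self hq, gaussBinom_eq_zero]
  · obtain ⟨c, rfl⟩ := Nat.exists_eq_add_of_lt h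
    have hb := qFactorial_ne_zero hq (b + 1)
    have hc := qFactorial_ne_zero hq (c + 1)
    rw [gaussBinom_eq_qFactorial_div hq (by lia), gaussBinom_eq_qFactorial_div hq (by lia),
      gaussBinom_eq_qFactorial_div hq (by lia), show b + c + 1 + 1 - (b + 1) = c + 1 by lia,
      show b + c + 1 - b = c + 1 by lia, show b + c + 1 - (b + 1) = c by lia]
    simp only [qFactorial_succ, mul_ne_zero_iff] at hb hc ⊢
    field [hb.1, hb.2, hc.1, hc.2]

lemma gaussMoebius_succ (q : ℚ) (i : ℕ) : gaussMoebius q (i + 1) = -(q ^ i * gaussMoebius q i) := by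
  rw [gaussMoebius, Nat.triangle_succ, gaussMoebius]
  ring

lemma sum_range_gaussMoebius_mul_gaussBinom_succ (hq : 1 < q) (n m : ℕ) :
    ∑ i ∈ Finset.range (m + 1), gaussMoebius q i * gaussBinom q (n + 1) i =
      -gaussMoebius q (m + 1) * gaussBinom q n m := by
  induction m with
  | zero => simp [gaussMoebius, gaussBinom_zero_right]
  | succ m ih =>
    rw [Finset.sum_range_succ, ih, gaussBinom_succ_succ hq, gaussMoebius_succ q (m + 1)]
    ring

lemma sum_gaussMoebius_mul_gaussBinom (hq : 1 < q) (n : ℕ) :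
    ∑ i ∈ Finset.range (n + 1), gaussMoebius q i * gaussBinom q n i = if n = 0 then 1 else 0 := by
  rcases n with _ | n
  · simp [gaussMoebius, gaussBinom_zero_right]
  · rw [sum_range_gaussMoebius_mul_gaussBinom_succ hq, gaussBinom_eq_zero n.lt_succ_self, mul_zero,
      if_neg n.succ_ne_zero]

lemma gaussBinom_mul_prod_pow_sub_pow (hq : 1 < q) (h : b ≤ a) :
    gaussBinom q a b * ∏ j ∈ Finset.range b, (q ^ b - q ^ j) =
      ∏ j ∈ Finset.range b, (q ^ a - q ^ j) := by
  rw [gaussBinom, if_pos h, ← Finset.prod_mul_distrib]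
  refine Finset.prod_congr rfl fun j hj => ?_
  have hjb : j < b := Finset.mem_range.1 hj
  have factor {c : ℕ} (hc : b ≤ c) : q ^ c - q ^ j = (q ^ (c - j) - 1) * q ^ j := by
    rw [sub_mul, one_mul, pow_sub_mul_pow q (hjb.le.trans hc)]
  have hne : q ^ (b - j) - 1 ≠ 0 := (sub_pos.2 (one_lt_pow₀ hq (Nat.sub_pos_of_lt hjb).ne')).ne'
  rw [factor le_rfl, factor h, ← mul_assoc, div_mul_cancel₀ _ hne]

end GaussBinom

/-! ### Counting subspaces -/

section Subspaces

variable {F V : Type*} [Field F] [AddCommGroup V] [Module F V]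

lemma finrank_comap_mkQ [FiniteDimensional F V] (p : Submodule F V) (W : Submodule F (V ⧸ p)) :
    finrank F (W.comap p.mkQ) = finrank F p + finrank F W := by
  have hsurj : LinearMap.range (W.mkQ ∘ₗ p.mkQ) = ⊤ :=
    LinearMap.range_eq_top.2 (W.mkQ_surjective.comp p.mkQ_surjective)
  have hcomp := LinearMap.finrank_range_add_finrank_ker (W.mkQ ∘ₗ p.mkQ)
  rw [hsurj, finrank_top, LinearMap.ker_comp, Submodule.ker_mkQ] at hcomp
  have hW := W.finrank_quotient_add_finrank
  have hp := p.finrank_quotient_add_finrank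
  lia

lemma exists_le_finrank_eq [FiniteDimensional F V] (S : Submodule F V) {b : ℕ}
    (h : finrank F S ≤ b) (hb : b ≤ finrank F V) :
    ∃ T : Submodule F V, S ≤ T ∧ finrank F T = b := by
  have hS := S.finrank_quotient_add_finrank
  obtain ⟨v, hv⟩ := exists_linearIndependent_of_le_finrank
    (R := F) (M := V ⧸ S) (n := b - finrank F S) (by lia)
  refine ⟨(Submodule.span F (Set.range v)).comap S.mkQ, S.le_comap_mkQ _, ?_⟩
  rw [finrank_comap_mkQ, finrank_span_eq_card hv, Fintype.card_fin]
  lia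

lemma card_linearIndependent_span_eq [FiniteDimensional F V] {b : ℕ} (W : Submodule F V)
    (hW : finrank F W = b) :
    Nat.card {s : {s : Fin b → V // LinearIndependent F s} //
      Submodule.span F (Set.range s.1) = W} =
      Nat.card {s : Fin b → W // LinearIndependent F s} := by
  symm
  refine Nat.card_congr (Equiv.ofBijective
    (fun s => ⟨⟨W.subtype ∘ s.1, s.2.map' W.subtype W.ker_subtype⟩, ?_⟩) ⟨?_, ?_⟩)
  · rw [Set.range_comp, ← Submodule.map_span,
      s.2.span_eq_top_of_card_eq_finrank' (by simp [hW]), Submodule.map_subtype_top]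
  · rintro ⟨s, _⟩ ⟨s', _⟩ h
    simp only [Subtype.mk.injEq] at h ⊢
    exact W.injective_subtype.comp_left h
  · rintro ⟨⟨s, hs⟩, h⟩
    have hmem i : s i ∈ W := h ▸ Submodule.subset_span (Set.mem_range_self i)
    exact ⟨⟨fun i => ⟨s i, hmem i⟩, LinearIndependent.of_comp W.subtype hs⟩, rfl⟩

lemma card_linearIndependent_eq_card_submodule_mul [Fintype F] [Finite V] (b : ℕ) :
    Nat.card {s : Fin b → V // LinearIndependent F s} =
      Nat.card {W : Submodule F V // finrank F W = b} *
        ∏ i : Fin b, (Fintype.card F ^ b - Fintype.card F ^ (i : ℕ)) := by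
  have := Fintype.ofFinite {W : Submodule F V // finrank F W = b}
  let spanned (s : {s : Fin b → V // LinearIndependent F s}) :
      {W : Submodule F V // finrank F W = b} :=
    ⟨Submodule.span F (Set.range s.1), by simp [finrank_span_eq_card s.2]⟩
  have card_fiber W : Nat.card {s // spanned s = W} =
      ∏ i : Fin b, (Fintype.card F ^ b - Fintype.card F ^ (i : ℕ)) := by
    simp only [spanned, Subtype.ext_iff]
    rw [card_linearIndependent_span_eq W.1 W.2, card_linearIndependent W.2.ge, W.2]
  rw [← Nat.card_congr (Equiv.sigmaFiberEquiv spanned), Nat.card_sigma]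
  simp only [card_fiber, Finset.sum_const, Finset.card_univ, smul_eq_mul, Nat.card_eq_fintype_card]

lemma cast_prod_pow_sub_pow {q a b : ℕ} (hq : 0 < q) (h : b ≤ a) :
    ((∏ i : Fin b, (q ^ a - q ^ (i : ℕ)) : ℕ) : ℚ) =
      ∏ j ∈ Finset.range b, ((q : ℚ) ^ a - (q : ℚ) ^ j) := by
  rw [← Fin.prod_univ_eq_prod_range (fun j => (q : ℚ) ^ a - (q : ℚ) ^ j), Nat.cast_prod]
  refine Finset.prod_congr rfl fun i _ => ?_
  rw [Nat.cast_sub (Nat.pow_le_pow_right hq (i.2.le.trans h)), Nat.cast_pow, Nat.cast_pow]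

variable [Fintype F] [Finite V]

lemma ncard_finrank_eq (b : ℕ) :
    ({W : Submodule F V | finrank F W = b}.ncard : ℚ) =
      gaussBinom (Fintype.card F) (finrank F V) b := by
  rcases lt_or_ge (finrank F V) b with hb | hb
  · have hempty : {W : Submodule F V | finrank F W = b} = ∅ :=
      Set.eq_empty_of_forall_notMem fun W hW => (W.finrank_le.trans_lt hb).ne hW
    rw [gaussBinom_eq_zero hb, hempty, Set.ncard_empty, Nat.cast_zero]
  have hq : (1 : ℚ) < Fintype.card F := mod_cast Fintype.one_lt_card
  have hne : ∏ j ∈ Finset.range b, ((Fintype.card F : ℚ) ^ b - (Fintype.card F : ℚ) ^ j) ≠ 0 :=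
    Finset.prod_ne_zero_iff.2 fun j hj =>
      (sub_pos.2 (pow_lt_pow_right₀ hq (Finset.mem_range.1 hj))).ne'
  refine mul_right_cancel₀ hne ?_
  rw [gaussBinom_mul_prod_pow_sub_pow hq hb, ← cast_prod_pow_sub_pow Fintype.card_pos le_rfl,
    ← cast_prod_pow_sub_pow Fintype.card_pos hb, ← card_linearIndependent hb,
    card_linearIndependent_eq_card_submodule_mul, Nat.cast_mul]
  rfl

lemma sum_submodule_finrank [Fintype (Submodule F V)] (φ : ℕ → ℚ) :
    ∑ W : Submodule F V, φ (finrank F W) = ∑ i ∈ Finset.range (finrank F V + 1),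
      gaussBinom (Fintype.card F) (finrank F V) i * φ i := by
  rw [← Finset.sum_fiberwise_of_maps_to (t := Finset.range (finrank F V + 1))
    (g := fun W : Submodule F V => finrank F W)
    fun W _ => Finset.mem_range_succ_iff.2 W.finrank_le]
  refine Finset.sum_congr rfl fun i _ => ?_
  rw [Finset.sum_congr rfl fun W hW => congrArg φ (Finset.mem_filter.1 hW).2, Finset.sum_const,
    nsmul_eq_mul, ← ncard_finrank_eq, ← Set.ncard_coe_finset]
  simp

open Classical in
lemma sum_interval_finrank [Fintype (Submodule F V)] {S K : Submodule F V} (h : S ≤ K)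
    (φ : ℕ → ℚ) :
    ∑ T with S ≤ T ∧ T ≤ K, φ (finrank F T - finrank F S) =
      ∑ i ∈ Finset.range (finrank F K - finrank F S + 1),
        gaussBinom (Fintype.card F) (finrank F K - finrank F S) i * φ i := by
  set p := S.submoduleOf K
  have hp : finrank F p = finrank F S := (Submodule.submoduleOfEquivOfLe h).finrank_eq
  have hdim : finrank F (K ⧸ p) = finrank F K - finrank F S := by
    rw [← hp, ← p.finrank_quotient_add_finrank, Nat.add_sub_cancel]
  have : Finite (K ⧸ p) := .of_surjective _ p.mkQ_surjective
  have := Fintype.ofFinite (Submodule F (K ⧸ p))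
  have hcomap (W : Submodule F (K ⧸ p)) :
      finrank F ((W.comap p.mkQ).map K.subtype) = finrank F S + finrank F W := by
    rw [Submodule.finrank_map_subtype_eq, finrank_comap_mkQ, hp]
  rw [← hdim, ← sum_submodule_finrank]
  symm
  refine Finset.sum_bij (fun W _ => (W.comap p.mkQ).map K.subtype) (fun W _ => ?_)
    (fun W _ W' _ hW => ?_) (fun T hT => ?_) fun W _ => ?_
  · rw [Finset.mem_filter_univ]
    refine ⟨?_, K.map_subtype_le _⟩
    rw [← inf_eq_right.2 h, ← Submodule.map_comap_subtype]
    exact Submodule.map_mono (p.le_comap_mkQ W)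
  · exact Submodule.comap_injective_of_surjective p.mkQ_surjective
      (Submodule.map_injective_of_injective K.injective_subtype hW)
  · obtain ⟨hST, hTK⟩ := (Finset.mem_filter_univ _).1 hT
    refine ⟨(T.submoduleOf K).map p.mkQ, Finset.mem_univ _, ?_⟩
    rw [Submodule.comap_map_mkQ, sup_eq_right.2 (Submodule.comap_mono hST),
      Submodule.submoduleOf, Submodule.map_comap_subtype, inf_eq_right.2 hTK]
  · rw [hcomap, Nat.add_sub_cancel_left]

open Classical in
lemma sum_gaussMoebius_interval [Fintype (Submodule F V)] {S K : Submodule F V} (h : S ≤ K) :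
    ∑ T with S ≤ T ∧ T ≤ K, gaussMoebius (Fintype.card F) (finrank F T - finrank F S) =
      if K = S then 1 else 0 := by
  have hq : (1 : ℚ) < Fintype.card F := mod_cast Fintype.one_lt_card
  have hKS : finrank F K - finrank F S = 0 ↔ K = S := by
    rw [Nat.sub_eq_zero_iff_le]
    exact ⟨fun hle => (Submodule.eq_of_le_of_finrank_le h hle).symm, fun hK => hK ▸ le_rfl⟩
  simp only [sum_interval_finrank h, mul_comm (gaussBinom _ _ _),
    sum_gaussMoebius_mul_gaussBinom hq, hKS]

open Classical in
lemma sum_gaussMoebius_mul_sum_ge [Fintype (Submodule F V)] (g : Submodule F V → ℚ)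
    (S : Submodule F V) :
    ∑ T with S ≤ T, gaussMoebius (Fintype.card F) (finrank F T - finrank F S) *
      ∑ K with T ≤ K, g K = g S := by
  calc _ = ∑ K with S ≤ K, ∑ T with S ≤ T ∧ T ≤ K,
        gaussMoebius (Fintype.card F) (finrank F T - finrank F S) * g K := by
        simp_rw [Finset.mul_sum]
        refine Finset.sum_comm' fun T K => ?_
        simp only [Finset.mem_filter_univ]
        exact ⟨fun ⟨hST, hTK⟩ => ⟨⟨hST, hTK⟩, hST.trans hTK⟩, fun ⟨⟨hST, hTK⟩, _⟩ => ⟨hST, hTK⟩⟩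
    _ = ∑ K with S ≤ K, if K = S then g K else 0 := by
        refine Finset.sum_congr rfl fun K hK => ?_
        rw [← Finset.sum_mul, sum_gaussMoebius_interval ((Finset.mem_filter_univ _).1 hK), ite_mul,
          one_mul, zero_mul]
    _ = g S := by
        rw [Finset.sum_ite_eq' _ S g, if_pos (by simp)]

end Subspaces

/-! ### Rank distribution of linear MRD codes -/

section RankMetric

variable {F A B : Type*} [Field F] [AddCommGroup A] [Module F A] [AddCommGroup B] [Module F B]
  {δ : ℕ}

/-- A rank-metric code of minimum distance at least `δ`; linear maps `A → B` play the role of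
matrices. -/
def IsRankMetricCode (δ : ℕ) (D : Set (A →ₗ[F] B)) : Prop :=
  D.Pairwise fun f g => δ ≤ finrank F (LinearMap.range (f - g))

/-- A linear maximum rank distance code: the dimension attains the Singleton bound
`dim B * (dim A - δ + 1)`, which is the sharp one for `dim A ≤ dim B`. -/
structure IsLinearMRD (δ : ℕ) (C : Submodule F (A →ₗ[F] B)) : Prop where
  one_le : 1 ≤ δ
  le_finrank : δ ≤ finrank F A
  isRankMetricCode : IsRankMetricCode δ (C : Set (A →ₗ[F] B))
  finrank_eq : finrank F C = finrank F B * (finrank F A - δ + 1)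

/-- The number `A_r` of codewords of rank `r` in a linear MRD code with minimum distance `δ` in
`F_q^{k×n}`, by Delsarte's formula; see `IsLinearMRD.ncard_finrank_range_eq`. -/
noncomputable def mrdRankCount (q : ℚ) (k n δ r : ℕ) : ℚ :=
  gaussBinom q k r * ∑ i ∈ Finset.range (r - δ + 1),
    gaussMoebius q i * gaussBinom q r i * (q ^ (n * (r - δ + 1 - i)) - 1)

lemma sum_gaussMoebius_mul_gaussBinom_mul_pow {q : ℚ} (hq : 1 < q) {r : ℕ} (n : ℕ) (hδ : 1 ≤ δ)
    (hr : δ ≤ r) :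
    ∑ i ∈ Finset.range (r + 1), gaussMoebius q i * gaussBinom q r i * q ^ (n * (r + 1 - δ - i)) =
      ∑ i ∈ Finset.range (r - δ + 1),
        gaussMoebius q i * gaussBinom q r i * (q ^ (n * (r - δ + 1 - i)) - 1) := by
  have hzero : ∑ i ∈ Finset.range (r + 1), gaussMoebius q i * gaussBinom q r i = 0 := by
    rw [sum_gaussMoebius_mul_gaussBinom hq, if_neg (by lia)]
  rw [← sub_zero (∑ i ∈ Finset.range (r + 1), _), ← hzero, ← Finset.sum_sub_distrib]
  symm
  refine Finset.sum_subset_zero_on_sdiff (Finset.range_subset_range.2 (by lia))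
    (fun i hi => ?_) fun i _ => ?_
  · rw [show r + 1 - δ - i = 0 by simp at hi; lia, mul_zero, pow_zero, mul_one, sub_self]
  · rw [Nat.sub_add_comm hr, mul_sub, mul_one]

namespace IsLinearMRD

variable {C : Submodule F (A →ₗ[F] B)}

lemma le_finrank_range (hC : IsLinearMRD δ C) {f : A →ₗ[F] B} (hf : f ∈ C) (hne : f ≠ 0) :
    δ ≤ finrank F (LinearMap.range f) := by
  have hdist : δ ≤ finrank F (LinearMap.range (f - 0)) :=
    hC.isRankMetricCode hf C.zero_mem hne
  rwa [sub_zero] at hdist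

lemma eq_zero_of_le_ker [FiniteDimensional F A] (hC : IsLinearMRD δ C) {S : Submodule F A}
    (hS : finrank F A - δ + 1 ≤ finrank F S) {f : A →ₗ[F] B} (hf : f ∈ C)
    (h : S ≤ LinearMap.ker f) : f = 0 := by
  by_contra hne
  have hrange := hC.le_finrank_range hf hne
  have hker := Submodule.finrank_mono h
  have := f.finrank_range_add_finrank_ker
  lia

lemma injective_domRestrict [FiniteDimensional F A] (hC : IsLinearMRD δ C) {S : Submodule F A}
    (hS : finrank F A - δ + 1 ≤ finrank F S) :
    Function.Injective ((LinearMap.domRestrict' (M₂ := B) S).domRestrict C) := by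
  refine (injective_iff_map_eq_zero _).2 fun f hf => Subtype.ext ?_
  exact hC.eq_zero_of_le_ker hS f.2 fun x hx => LinearMap.congr_fun hf ⟨x, hx⟩

lemma surjective_domRestrict [FiniteDimensional F A] [FiniteDimensional F B]
    (hC : IsLinearMRD δ C) {S : Submodule F A} (hS : finrank F S ≤ finrank F A - δ + 1) :
    Function.Surjective ((LinearMap.domRestrict' (M₂ := B) S).domRestrict C) := by
  have hle : finrank F A - δ + 1 ≤ finrank F A := by
    have := hC.one_le
    have := hC.le_finrank
    lia
  obtain ⟨T, hST, hT⟩ := exists_le_finrank_eq S hS hle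
  have hsurj : Function.Surjective ((LinearMap.domRestrict' (M₂ := B) T).domRestrict C) := by
    refine (LinearMap.injective_iff_surjective_of_finrank_eq_finrank ?_).1
      (hC.injective_domRestrict hT.ge)
    rw [hC.finrank_eq, finrank_linearMap, hT, mul_comm]
  intro g
  obtain ⟨g', hg'⟩ := g.exists_extend
  obtain ⟨f, hf⟩ := hsurj (g'.domRestrict T)
  refine ⟨f, LinearMap.ext fun x => ?_⟩
  rw [← hg']
  exact LinearMap.congr_fun hf ⟨x, hST x.2⟩

variable [Fintype F] [Finite A] [Finite B]

lemma ncard_le_ker (hC : IsLinearMRD δ C) (S : Submodule F A) :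
    {f ∈ (C : Set (A →ₗ[F] B)) | S ≤ LinearMap.ker f}.ncard =
      Fintype.card F ^ (finrank F B * (finrank F A - δ + 1 - finrank F S)) := by
  set res := (LinearMap.domRestrict' (M₂ := B) S).domRestrict C
  have himage : {f ∈ (C : Set (A →ₗ[F] B)) | S ≤ LinearMap.ker f} =
      (LinearMap.ker res).map C.subtype := by
    ext f
    simp only [Set.mem_ofPred_eq, SetLike.mem_coe, Submodule.mem_map, LinearMap.mem_ker]
    constructor
    · rintro ⟨hf, hS⟩
      exact ⟨⟨f, hf⟩, LinearMap.ext fun x => hS x.2, rfl⟩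
    · rintro ⟨f, hf, rfl⟩
      exact ⟨f.2, fun x hx => LinearMap.congr_fun hf ⟨x, hx⟩⟩
  rw [himage, ← Nat.card_coe_set_eq, SetLike.coe_sort_coe,
    Module.natCard_eq_pow_finrank (K := F), Nat.card_eq_fintype_card,
    Submodule.finrank_map_subtype_eq]
  congr 1
  rcases le_total (finrank F S) (finrank F A - δ + 1) with hS | hS
  · have hrange := res.finrank_range_add_finrank_ker
    rw [LinearMap.range_eq_top.2 (hC.surjective_domRestrict hS), finrank_top, finrank_linearMap,
      hC.finrank_eq] at hrange
    rw [Nat.mul_sub, mul_comm _ (finrank F S)]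
    lia
  · rw [LinearMap.ker_eq_bot.2 (hC.injective_domRestrict hS), finrank_bot, Nat.sub_eq_zero_of_le hS,
      mul_zero]

lemma sum_ncard_ker_eq_of_ge [Fintype (Submodule F A)] [DecidableLE (Submodule F A)]
    (hC : IsLinearMRD δ C) (S : Submodule F A) :
    ∑ K with S ≤ K, {f ∈ (C : Set (A →ₗ[F] B)) | LinearMap.ker f = K}.ncard =
      Fintype.card F ^ (finrank F B * (finrank F A - δ + 1 - finrank F S)) := by
  have : Finite (A →ₗ[F] B) := DFunLike.finite _
  rw [← hC.ncard_le_ker S, ncard_eq_sum_ncard_fiberwise (Set.toFinite _)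
    (t := {K | S ≤ K}) (f := LinearMap.ker) (by simp [Set.MapsTo])]
  refine Finset.sum_congr rfl fun K hK => congrArg _ (Set.ext fun f => ?_)
  have hSK : S ≤ K := (Finset.mem_filter_univ _).1 hK
  exact ⟨fun ⟨hf, hK⟩ => ⟨⟨hf, hK ▸ hSK⟩, hK⟩, fun ⟨⟨hf, _⟩, hK⟩ => ⟨hf, hK⟩⟩

lemma ncard_ker_eq (hC : IsLinearMRD δ C) {S : Submodule F A} {r : ℕ}
    (hS : finrank F A = finrank F S + r) :
    ({f ∈ (C : Set (A →ₗ[F] B)) | LinearMap.ker f = S}.ncard : ℚ) =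
      ∑ i ∈ Finset.range (r + 1), gaussMoebius (Fintype.card F) i *
        gaussBinom (Fintype.card F) r i *
          (Fintype.card F : ℚ) ^ (finrank F B * (r + 1 - δ - i)) := by
  classical
  have := Fintype.ofFinite (Submodule F A)
  let φ (i : ℕ) : ℚ := gaussMoebius (Fintype.card F) i *
    (Fintype.card F : ℚ) ^ (finrank F B * (r + 1 - δ - i))
  have hδ := hC.le_finrank
  calc ({f ∈ (C : Set (A →ₗ[F] B)) | LinearMap.ker f = S}.ncard : ℚ)
    _ = ∑ T with S ≤ T, gaussMoebius (Fintype.card F) (finrank F T - finrank F S) *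
          ∑ K with T ≤ K, ({f ∈ (C : Set (A →ₗ[F] B)) | LinearMap.ker f = K}.ncard : ℚ) :=
        (sum_gaussMoebius_mul_sum_ge (fun K =>
          ({f ∈ (C : Set (A →ₗ[F] B)) | LinearMap.ker f = K}.ncard : ℚ)) S).symm
    _ = ∑ T with S ≤ T ∧ T ≤ ⊤, φ (finrank F T - finrank F S) := by
        simp only [le_top, and_true]
        refine Finset.sum_congr rfl fun T hT => ?_
        have hST := Submodule.finrank_mono ((Finset.mem_filter_univ _).1 hT)
        rw [← Nat.cast_sum, hC.sum_ncard_ker_eq_of_ge T, Nat.cast_pow,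
          show finrank F A - δ + 1 - finrank F T = r + 1 - δ - (finrank F T - finrank F S) by lia]
    _ = _ := by
        rw [sum_interval_finrank le_top, finrank_top, hS, Nat.add_sub_cancel_left]
        exact Finset.sum_congr rfl fun i _ => by ring

lemma ncard_finrank_range_eq (hC : IsLinearMRD δ C) {r : ℕ} (hr : δ ≤ r) :
    ({f ∈ (C : Set (A →ₗ[F] B)) | finrank F (LinearMap.range f) = r}.ncard : ℚ) =
      mrdRankCount (Fintype.card F) (finrank F A) (finrank F B) δ r := by
  classical
  have hq : (1 : ℚ) < Fintype.card F := mod_cast Fintype.one_lt_card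
  have hrank (f : A →ₗ[F] B) := f.finrank_range_add_finrank_ker
  rcases lt_or_ge (finrank F A) r with hA | hA
  · have hempty : {f ∈ (C : Set (A →ₗ[F] B)) | finrank F (LinearMap.range f) = r} = ∅ :=
      Set.eq_empty_of_forall_notMem fun f hf => by have := hrank f; have := hf.2; lia
    rw [hempty, Set.ncard_empty, Nat.cast_zero, mrdRankCount, gaussBinom_eq_zero hA, zero_mul]
  have : Finite (A →ₗ[F] B) := DFunLike.finite _
  have := Fintype.ofFinite (Submodule F A)
  have hker (f : A →ₗ[F] B) :
      finrank F (LinearMap.range f) = r ↔ finrank F (LinearMap.ker f) = finrank F A - r := by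
    have := hrank f
    lia
  have hfiber {S : Submodule F A} (hS : finrank F S = finrank F A - r) :
      {f ∈ {f ∈ (C : Set (A →ₗ[F] B)) | finrank F (LinearMap.range f) = r} |
        LinearMap.ker f = S} = {f ∈ (C : Set (A →ₗ[F] B)) | LinearMap.ker f = S} :=
    Set.ext fun f => ⟨fun ⟨⟨hf, _⟩, h⟩ => ⟨hf, h⟩, fun ⟨hf, h⟩ => ⟨⟨hf, (hker f).2 (h ▸ hS)⟩, h⟩⟩
  rw [ncard_eq_sum_ncard_fiberwise (Set.toFinite _) (f := LinearMap.ker)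
    (t := {S : Submodule F A | finrank F S = finrank F A - r})
    fun f hf => by simpa using (hker f).1 hf.2, Nat.cast_sum,
    Finset.sum_congr rfl fun S hS => ?_, Finset.sum_const, nsmul_eq_mul]
  · rw [← Set.ncard_coe_finset, Finset.coe_filter_univ, ncard_finrank_eq, gaussBinom_symm hq hA]
    rfl
  · have hS := (Finset.mem_filter_univ _).1 hS
    rw [hfiber hS, hC.ncard_ker_eq (r := r) (by lia),
      sum_gaussMoebius_mul_gaussBinom_mul_pow hq _ hC.one_le hr]

lemma ncard_finrank_range_le (hC : IsLinearMRD δ C) (s : ℕ) :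
    ({f ∈ (C : Set (A →ₗ[F] B)) | finrank F (LinearMap.range f) ≤ s}.ncard : ℚ) =
      1 + ∑ r ∈ Finset.Icc δ s, mrdRankCount (Fintype.card F) (finrank F A) (finrank F B) δ r := by
  have : Finite (A →ₗ[F] B) := DFunLike.finite _
  have hzero : 0 ∉ Finset.Icc δ s := by simp [Nat.one_le_iff_ne_zero.1 hC.one_le]
  have hmaps : Set.MapsTo (fun f : A →ₗ[F] B => finrank F (LinearMap.range f))
      {f ∈ (C : Set (A →ₗ[F] B)) | finrank F (LinearMap.range f) ≤ s}
      (insert 0 (Finset.Icc δ s) : Finset ℕ) := by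
    rintro f ⟨hf, hs⟩
    rcases eq_or_ne f 0 with rfl | hne
    · simp
    · exact Finset.mem_insert_of_mem (Finset.mem_Icc.2 ⟨hC.le_finrank_range hf hne, hs⟩)
  have hone : {f ∈ {f ∈ (C : Set (A →ₗ[F] B)) | finrank F (LinearMap.range f) ≤ s} |
      finrank F (LinearMap.range f) = 0} = {0} := by
    ext f
    simp only [Set.mem_ofPred_eq, Submodule.finrank_eq_zero, LinearMap.range_eq_bot,
      Set.mem_singleton_iff]
    refine ⟨fun h => h.2, ?_⟩
    rintro rfl
    exact ⟨⟨C.zero_mem, by rw [LinearMap.range_zero, finrank_bot]; exact s.zero_le⟩, rfl⟩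
  rw [ncard_eq_sum_ncard_fiberwise (Set.toFinite _) hmaps, Finset.sum_insert hzero, hone,
    Set.ncard_singleton, Nat.cast_add, Nat.cast_one, Nat.cast_sum]
  refine congrArg _ (Finset.sum_congr rfl fun r hr => ?_)
  obtain ⟨hδ, hs⟩ := Finset.mem_Icc.1 hr
  rw [← hC.ncard_finrank_range_eq hδ]
  refine congrArg _ (congrArg _ (Set.ext fun f => ?_))
  exact ⟨fun ⟨⟨hf, _⟩, h⟩ => ⟨hf, h⟩, fun ⟨hf, h⟩ => ⟨⟨hf, h.trans_le hs⟩, h⟩⟩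

end IsLinearMRD

end RankMetric

/-! ### Gabidulin codes -/

section Gabidulin

open Polynomial

/-- The linearized polynomial `∑ c_i X^{q^i}`. -/
noncomputable def linearizedPoly {K : Type*} [Semiring K] (q : ℕ) {κ : ℕ} (c : Fin κ → K) : K[X] :=
  ∑ i, C (c i) * X ^ q ^ (i : ℕ)

lemma linearizedPoly_ne_zero {K : Type*} [Semiring K] {q κ : ℕ} (hq : 1 < q) {c : Fin κ → K}
    (hc : c ≠ 0) : linearizedPoly q c ≠ 0 := by
  obtain ⟨i, hi⟩ := Function.ne_iff.1 hc
  intro h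
  have hcoeff : (linearizedPoly q c).coeff (q ^ (i : ℕ)) = c i := by
    simp [linearizedPoly, coeff_X_pow, (Nat.pow_right_injective hq).eq_iff, Fin.val_inj]
  exact hi (by rw [← hcoeff, h, coeff_zero, Pi.zero_apply])

lemma natDegree_linearizedPoly_le {K : Type*} [Semiring K] {q κ : ℕ} (hq : 1 ≤ q) (c : Fin κ → K) :
    (linearizedPoly q c).natDegree ≤ q ^ (κ - 1) :=
  natDegree_sum_le_of_forall_le _ _ fun i _ => (natDegree_C_mul_X_pow_le _ _).trans <|
    Nat.pow_le_pow_right hq (Nat.le_sub_one_of_lt i.2)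

variable {F K : Type*} [Field F] [Fintype F] [Field K] [Algebra F K] {κ : ℕ}

variable (F K κ) in
/-- Evaluation of linearized polynomials with `κ` coefficients, as an `F`-linear family of
`F`-linear endomorphisms of `K`: the Gabidulin code. -/
noncomputable def linearizedEval : (Fin κ → K) →ₗ[F] K →ₗ[F] K :=
  (Fintype.linearCombination K fun i : Fin κ =>
    (FiniteField.frobeniusAlgHom F K ^ (i : ℕ)).toLinearMap).restrictScalars F

lemma linearizedEval_apply (c : Fin κ → K) (x : K) :
    linearizedEval F K κ c x = (linearizedPoly (Fintype.card F) c).eval x := by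
  simp [linearizedEval, linearizedPoly, Fintype.linearCombination_apply, eval_finsetSum,
    FiniteField.coe_frobeniusAlgHom, pow_iterate]

lemma finrank_ker_linearizedEval_lt [Finite K] {c : Fin κ → K} (hc : c ≠ 0) :
    finrank F (LinearMap.ker (linearizedEval F K κ c)) < κ := by
  have hq : 1 < Fintype.card F := Fintype.one_lt_card
  have hroots : (LinearMap.ker (linearizedEval F K κ c) : Set K) =
      (linearizedPoly (Fintype.card F) c).rootSet K := by
    ext x
    rw [SetLike.mem_coe, LinearMap.mem_ker, linearizedEval_apply,
      mem_rootSet_of_ne (linearizedPoly_ne_zero hq hc), coe_aeval_eq_eval]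
  have hcard : Fintype.card F ^ finrank F (LinearMap.ker (linearizedEval F K κ c)) ≤
      Fintype.card F ^ (κ - 1) := by
    rw [← Nat.card_eq_fintype_card (α := F), ← Module.natCard_eq_pow_finrank,
      ← SetLike.coe_sort_coe, Nat.card_coe_set_eq, hroots, Nat.card_eq_fintype_card]
    exact (ncard_rootSet_le _ K).trans (natDegree_linearizedPoly_le hq.le c)
  have hκ : 0 < κ := Fin.pos_iff_nonempty.2 ⟨(Function.ne_iff.1 hc).choose⟩
  have := (Nat.pow_le_pow_iff_right hq).1 hcard
  lia

end Gabidulin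

section Existence

variable {F A B W : Type*} [Field F] [AddCommGroup A] [Module F A] [AddCommGroup B] [Module F B]
  [AddCommGroup W] [Module F W] {δ : ℕ}

lemma finrank_comap_le_of_injective [FiniteDimensional F B] {ι : A →ₗ[F] B}
    (hι : Function.Injective ι) (p : Submodule F B) : finrank F (p.comap ι) ≤ finrank F p := by
  rw [(Submodule.equivMapOfInjective ι hι _).finrank_eq]
  exact Submodule.finrank_mono (Submodule.map_comap_le ι p)

lemma isLinearMRD_range (Λ : W →ₗ[F] A →ₗ[F] B) (hδ : 1 ≤ δ) (hA : δ ≤ finrank F A)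
    (hW : finrank F W = finrank F B * (finrank F A - δ + 1))
    (hΛ : ∀ c ≠ 0, δ ≤ finrank F (LinearMap.range (Λ c))) :
    IsLinearMRD δ (LinearMap.range Λ) where
  one_le := hδ
  le_finrank := hA
  isRankMetricCode := by
    rintro _ ⟨c, rfl⟩ _ ⟨c', rfl⟩ hne
    change δ ≤ finrank F (LinearMap.range (Λ c - Λ c'))
    rw [← map_sub]
    exact hΛ _ (sub_ne_zero.2 (ne_of_apply_ne Λ hne))
  finrank_eq := by
    have hinj : Function.Injective Λ := by
      refine (injective_iff_map_eq_zero Λ).2 fun c hc => by_contra fun hne => ?_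
      have := hΛ c hne
      rw [hc, LinearMap.range_zero, finrank_bot] at this
      lia
    rw [LinearMap.finrank_range_of_inj hinj, hW]

lemma exists_isLinearMRD [Finite F] [FiniteDimensional F A] [FiniteDimensional F B] (hδ : 1 ≤ δ)
    (hA : δ ≤ finrank F A) (hAB : finrank F A ≤ finrank F B) :
    ∃ C : Submodule F (A →ₗ[F] B), IsLinearMRD δ C := by
  have := Fintype.ofFinite F
  obtain ⟨p, hp⟩ := CharP.exists F
  have : Fact p.Prime := ⟨CharP.char_is_prime F p⟩
  have : NeZero (finrank F B) := ⟨by lia⟩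
  let K := FiniteField.Extension F p (finrank F B)
  have : Finite K := Module.finite_of_finite F
  have hK : finrank F K = finrank F B := FiniteField.finrank_extension F p _
  let e : K ≃ₗ[F] B := LinearEquiv.ofFinrankEq _ _ hK
  obtain ⟨ι, hι⟩ := (finrank_le_iff_exists_linearMap (R := F)).1 (hAB.trans hK.ge)
  let Λ : (Fin (finrank F A - δ + 1) → K) →ₗ[F] A →ₗ[F] B :=
    LinearMap.lcomp F B ι ∘ₗ LinearMap.llcomp F K K B e.toLinearMap ∘ₗ linearizedEval F K _
  refine ⟨LinearMap.range Λ, isLinearMRD_range Λ hδ hA ?_ fun c hc => ?_⟩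
  · rw [finrank_pi_fintype, Finset.sum_const, Finset.card_univ, Fintype.card_fin, hK, smul_eq_mul,
      mul_comm]
  · have hker : LinearMap.ker (Λ c) = (LinearMap.ker (linearizedEval F K _ c)).comap ι :=
      Submodule.ext fun x => e.map_eq_zero_iff
    have hlt := finrank_ker_linearizedEval_lt (F := F) hc
    have hle := finrank_comap_le_of_injective hι (LinearMap.ker (linearizedEval F K _ c))
    have := (Λ c).finrank_range_add_finrank_ker
    rw [hker] at this
    lia

end Existence

/-! ### Constant dimension codes -/

section ConstantDimension

variable {F A B E E' P : Type*} [Field F] [AddCommGroup A] [Module F A] [AddCommGroup B]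
  [Module F B] [AddCommGroup E] [Module F E] [AddCommGroup E'] [Module F E'] [AddCommGroup P]
  [Module F P] {δ : ℕ}

lemma disjoint_range_ker_of_injective_comp {f : A →ₗ[F] E} {π : E →ₗ[F] P}
    (h : Function.Injective (π ∘ₗ f)) : Disjoint (LinearMap.range f) (LinearMap.ker π) := by
  rw [Submodule.disjoint_def]
  rintro _ ⟨a, rfl⟩ ha
  rw [(map_eq_zero_iff (π ∘ₗ f) h).1 ha, map_zero]

lemma finrank_inf_le_finrank_map_inf_map [FiniteDimensional F P] {π : E →ₗ[F] P}
    {U : Submodule F E} (hU : Disjoint U (LinearMap.ker π)) (W : Submodule F E) :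
    finrank F ↥(U ⊓ W) ≤ finrank F ↥(U.map π ⊓ W.map π) := by
  have hinj : Function.Injective (π.domRestrict (U ⊓ W)) :=
    LinearMap.injective_domRestrict_iff.2 (hU.mono_left inf_le_left)
  rw [← LinearMap.finrank_range_of_inj hinj, LinearMap.range_domRestrict]
  exact Submodule.finrank_mono (Submodule.map_inf_le π)

lemma finrank_inf_add_finrank_inf_le [FiniteDimensional F E] {U K : Submodule F E}
    (h : Disjoint U K) (W : Submodule F E) :
    finrank F ↥(U ⊓ W) + finrank F ↥(W ⊓ K) ≤ finrank F W := by
  rw [← Submodule.finrank_sup_add_finrank_inf_eq,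
    (h.mono inf_le_left inf_le_right).eq_bot, finrank_bot, add_zero]
  exact Submodule.finrank_mono (sup_le inf_le_right inf_le_left)

lemma finrank_range_inf_range_add_finrank_ker_le [FiniteDimensional F E] {f g : A →ₗ[F] E}
    {π : E →ₗ[F] P} (hf : Function.Injective (π ∘ₗ f)) (hg : Function.Injective g) :
    finrank F ↥(LinearMap.range f ⊓ LinearMap.range g) + finrank F (LinearMap.ker (π ∘ₗ g)) ≤
      finrank F A := by
  have hker : finrank F ↥(LinearMap.range g ⊓ LinearMap.ker π) =
      finrank F (LinearMap.ker (π ∘ₗ g)) := by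
    rw [← Submodule.map_comap_eq, ← LinearMap.ker_comp]
    exact (Submodule.equivMapOfInjective g hg _).finrank_eq.symm
  rw [← hker, ← LinearMap.finrank_range_of_inj hg]
  exact finrank_inf_add_finrank_inf_le (disjoint_range_ker_of_injective_comp hf) _

lemma finrank_range_prod_inf_range_prod_le [FiniteDimensional F A] {φ : A →ₗ[F] E}
    (hφ : Function.Injective φ) (g h : A →ₗ[F] B) :
    finrank F ↥(LinearMap.range (φ.prod g) ⊓ LinearMap.range (φ.prod h)) ≤
      finrank F (LinearMap.ker (g - h)) := by
  refine (Submodule.finrank_mono ?_).trans (Submodule.finrank_map_le (φ.prod g) _)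
  rintro _ ⟨⟨a, rfl⟩, ⟨b, hb⟩⟩
  obtain ⟨hba, hgh⟩ := Prod.ext_iff.1 hb
  obtain rfl : b = a := hφ hba
  exact ⟨b, LinearMap.mem_ker.2 (sub_eq_zero.2 hgh.symm), rfl⟩

lemma two_mul_le_subspaceDist_iff {n k : ℕ} {U W : Submodule F (Fin n → F)}
    (hU : finrank F U = k) (hW : finrank F W = k) :
    2 * δ ≤ subspaceDist U W ↔ finrank F ↥(U ⊓ W) + δ ≤ k := by
  have hsum := Submodule.finrank_sup_add_finrank_inf_eq U W
  have hle := Submodule.finrank_mono (inf_le_left : U ⊓ W ≤ U)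
  rw [subspaceDist]
  lia

lemma exists_injective_range_eq [FiniteDimensional F A] [FiniteDimensional F E] {U : Submodule F E}
    (h : finrank F U = finrank F A) :
    ∃ φ : A →ₗ[F] E, Function.Injective φ ∧ LinearMap.range φ = U := by
  let e : A ≃ₗ[F] U := LinearEquiv.ofFinrankEq _ _ h.symm
  refine ⟨U.subtype ∘ₗ e.toLinearMap, U.injective_subtype.comp e.injective, ?_⟩
  rw [LinearMap.range_comp, LinearEquiv.range, Submodule.map_subtype_top]

/-- A constant dimension code with minimum subspace distance `2δ`, presented by injective maps
`A → E` whose ranges are the codewords; a generator matrix of a codeword is the matrix of such a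
map. -/
structure IsFrameCode (δ : ℕ) (Φ : Set (A →ₗ[F] E)) : Prop where
  injective : ∀ φ ∈ Φ, Function.Injective φ
  pairwise : Φ.Pairwise fun φ ψ =>
    finrank F ↥(LinearMap.range φ ⊓ LinearMap.range ψ) + δ ≤ finrank F A

namespace IsFrameCode

variable {Φ Φ₁ Φ₂ : Set (A →ₗ[F] E)}

lemma injOn_range (hΦ : IsFrameCode δ Φ) (hδ : 0 < δ) : Set.InjOn LinearMap.range Φ := by
  intro φ hφ ψ hψ h
  by_contra hne
  have hdist : finrank F ↥(LinearMap.range φ ⊓ LinearMap.range ψ) + δ ≤ finrank F A :=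
    hΦ.pairwise hφ hψ hne
  rw [← h, inf_idem, LinearMap.finrank_range_of_inj (hΦ.injective φ hφ)] at hdist
  lia

lemma image_comp (hΦ : IsFrameCode δ Φ) {e : E →ₗ[F] E'} (he : Function.Injective e) :
    IsFrameCode δ ((fun φ => e ∘ₗ φ) '' Φ) where
  injective := by
    rintro _ ⟨φ, hφ, rfl⟩
    exact he.comp (hΦ.injective φ hφ)
  pairwise := by
    rintro _ ⟨φ, hφ, rfl⟩ _ ⟨ψ, hψ, rfl⟩ hne
    change finrank F ↥(LinearMap.range (e ∘ₗ φ) ⊓ LinearMap.range (e ∘ₗ ψ)) + δ ≤ finrank F A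
    rw [LinearMap.range_comp, LinearMap.range_comp, ← Submodule.map_inf _ he,
      ← (Submodule.equivMapOfInjective e he _).finrank_eq]
    exact hΦ.pairwise hφ hψ (ne_of_apply_ne (fun φ => e ∘ₗ φ) hne)

lemma union (h₁ : IsFrameCode δ Φ₁) (h₂ : IsFrameCode δ Φ₂)
    (h : ∀ φ ∈ Φ₁, ∀ ψ ∈ Φ₂,
      finrank F ↥(LinearMap.range φ ⊓ LinearMap.range ψ) + δ ≤ finrank F A) :
    IsFrameCode δ (Φ₁ ∪ Φ₂) where
  injective φ hφ := hφ.elim (h₁.injective φ) (h₂.injective φ)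
  pairwise := by
    refine Set.pairwise_union.2 ⟨h₁.pairwise, h₂.pairwise, fun φ hφ ψ hψ _ => ⟨h φ hφ ψ hψ, ?_⟩⟩
    rw [inf_comm]
    exact h φ hφ ψ hψ

lemma disjoint (h₁ : IsFrameCode δ Φ₁) (hδ : 0 < δ)
    (h : ∀ φ ∈ Φ₁, ∀ ψ ∈ Φ₂,
      finrank F ↥(LinearMap.range φ ⊓ LinearMap.range ψ) + δ ≤ finrank F A) :
    Disjoint Φ₁ Φ₂ := by
  refine Set.disjoint_left.2 fun φ hφ₁ hφ₂ => ?_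
  have hself := h φ hφ₁ φ hφ₂
  rw [inf_idem, LinearMap.finrank_range_of_inj (h₁.injective φ hφ₁)] at hself
  lia

lemma image2_prod [FiniteDimensional F A] [FiniteDimensional F E] (hΦ : IsFrameCode δ Φ)
    {D : Set (A →ₗ[F] B)} (hD : IsRankMetricCode δ D) :
    IsFrameCode δ (Set.image2 LinearMap.prod Φ D) where
  injective := by
    rintro _ ⟨φ, hφ, g, _, rfl⟩
    exact fun a b hab => hΦ.injective φ hφ (Prod.ext_iff.1 hab).1
  pairwise := by
    rintro _ ⟨φ, hφ, g, hg, rfl⟩ _ ⟨ψ, hψ, h, hh, rfl⟩ hne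
    rcases eq_or_ne φ ψ with rfl | hφψ
    · have hrank : δ ≤ finrank F (LinearMap.range (g - h)) :=
        hD hg hh (ne_of_apply_ne (LinearMap.prod φ) hne)
      have hker := finrank_range_prod_inf_range_prod_le (hΦ.injective φ hφ) g h
      have := (g - h).finrank_range_add_finrank_ker
      lia
    · have hinj : Function.Injective (LinearMap.fst F E B ∘ₗ φ.prod g) := hΦ.injective φ hφ
      have hle := finrank_inf_le_finrank_map_inf_map (disjoint_range_ker_of_injective_comp hinj)
        (LinearMap.range (ψ.prod h))
      rw [← LinearMap.range_comp, ← LinearMap.range_comp, LinearMap.fst_prod,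
        LinearMap.fst_prod] at hle
      exact (Nat.add_le_add_right hle δ).trans (hΦ.pairwise hφ hψ hφψ)

end IsFrameCode

lemma ncard_image2_prod (Φ : Set (A →ₗ[F] E)) (D : Set (A →ₗ[F] B)) :
    (Set.image2 LinearMap.prod Φ D).ncard = Φ.ncard * D.ncard := by
  have hinj : Function.Injective2 (LinearMap.prod (R := F) (M := A) (M₂ := E) (M₃ := B)) :=
    fun φ ψ g h heq => ⟨by rw [← LinearMap.fst_prod φ g, heq, LinearMap.fst_prod],
      by rw [← LinearMap.snd_prod φ g, heq, LinearMap.snd_prod]⟩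
  rw [← Set.image_uncurry_prod, Set.ncard_image_of_injective _ hinj.uncurry, Set.ncard_prod]

lemma bddAbove_card_constantDimensionCode [Finite F] (n d k : ℕ) :
    BddAbove {M | ∃ C : Finset (Submodule F (Fin n → F)), C.card = M ∧
      (∀ U ∈ C, finrank F ↥U = k) ∧
      ∀ U ∈ C, ∀ W ∈ C, U ≠ W → d ≤ subspaceDist U W} := by
  have := Fintype.ofFinite (Submodule F (Fin n → F))
  refine ⟨Fintype.card (Submodule F (Fin n → F)), ?_⟩
  rintro _ ⟨C, rfl, -⟩
  exact C.card_le_univ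

variable [Fintype F]

lemma IsFrameCode.ncard_le_maxCDCSize [FiniteDimensional F E] {Φ : Set (A →ₗ[F] E)}
    (hΦ : IsFrameCode δ Φ) (hδ : 0 < δ) :
    Φ.ncard ≤ maxCDCSize F (finrank F E) (2 * δ) (finrank F A) := by
  let e : E ≃ₗ[F] (Fin (finrank F E) → F) := LinearEquiv.ofFinrankEq _ _ (by simp)
  have hΨ := hΦ.image_comp (e := e.toLinearMap) e.injective
  set Ψ := (fun φ : A →ₗ[F] E => e.toLinearMap ∘ₗ φ) '' Φ
  have hcard : (LinearMap.range '' Ψ).ncard = Φ.ncard := by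
    rw [(hΨ.injOn_range hδ).ncard_image]
    exact Set.ncard_image_of_injective _ fun _ _ => (LinearMap.cancel_left e.injective).1
  have hdim {φ} (hφ : φ ∈ Ψ) : finrank F (LinearMap.range φ) = finrank F A :=
    LinearMap.finrank_range_of_inj (hΨ.injective φ hφ)
  have hfin := Set.toFinite (LinearMap.range '' Ψ)
  refine le_csSup (bddAbove_card_constantDimensionCode _ _ _) ⟨hfin.toFinset, ?_, ?_, ?_⟩
  · rw [← Set.ncard_eq_toFinset_card, hcard]
  · simp only [Set.Finite.mem_toFinset]
    rintro _ ⟨φ, hφ, rfl⟩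
    exact hdim hφ
  · simp only [Set.Finite.mem_toFinset]
    rintro _ ⟨φ, hφ, rfl⟩ _ ⟨ψ, hψ, rfl⟩ hne
    exact (two_mul_le_subspaceDist_iff (hdim hφ) (hdim hψ)).2
      (hΨ.pairwise hφ hψ (ne_of_apply_ne LinearMap.range hne))

variable (A E δ) in
lemma exists_isFrameCode_ncard_eq_maxCDCSize [FiniteDimensional F A] [FiniteDimensional F E] :
    ∃ Φ : Set (A →ₗ[F] E), IsFrameCode δ Φ ∧
      Φ.ncard = maxCDCSize F (finrank F E) (2 * δ) (finrank F A) := by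
  obtain ⟨C, hC, hdim, hdist⟩ := Nat.sSup_mem (by exact ⟨0, ∅, by simp⟩)
    (bddAbove_card_constantDimensionCode (F := F) (finrank F E) (2 * δ) (finrank F A))
  choose! frame hinj hrange using fun U hU => exists_injective_range_eq (hdim U hU)
  have hframe : IsFrameCode δ (frame '' C) := by
    constructor
    · rintro _ ⟨U, hU, rfl⟩
      exact hinj U hU
    · rintro _ ⟨U, hU, rfl⟩ _ ⟨W, hW, rfl⟩ hne
      rw [hrange U hU, hrange W hW, ← two_mul_le_subspaceDist_iff (hdim U hU) (hdim W hW)]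
      exact hdist U hU W hW (ne_of_apply_ne frame hne)
  let e : (Fin (finrank F E) → F) ≃ₗ[F] E := LinearEquiv.ofFinrankEq _ _ (by simp)
  refine ⟨_, hframe.image_comp (e := e.toLinearMap) e.injective, ?_⟩
  have hframe_inj : Set.InjOn frame C := fun U hU W hW h => by
    rw [← hrange U hU, h, hrange W hW]
  rw [Set.ncard_image_of_injective _ fun _ _ => (LinearMap.cancel_left e.injective).1,
    hframe_inj.ncard_image, Set.ncard_coe_finset]
  exact hC

theorem parallel_linkage_le_maxCDCSize {X Y Z : Type*} [AddCommGroup X]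
    [Module F X] [AddCommGroup Y] [Module F Y] [AddCommGroup Z] [Module F Z] [FiniteDimensional F A]
    [FiniteDimensional F X] [FiniteDimensional F Y] [FiniteDimensional F Z] (hδ : 0 < δ)
    {D₁ : Set (A →ₗ[F] X × Y)} (hD₁ : IsRankMetricCode δ D₁)
    {D₂ : Set (A →ₗ[F] Y × Z)} (hD₂ : IsRankMetricCode δ D₂)
    (hrank : ∀ g ∈ D₂, finrank F (LinearMap.range g) + δ ≤ finrank F A) :
    maxCDCSize F (finrank F Z) (2 * δ) (finrank F A) * D₁.ncard +
        maxCDCSize F (finrank F X) (2 * δ) (finrank F A) * D₂.ncard ≤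
      maxCDCSize F (finrank F (X × Y × Z)) (2 * δ) (finrank F A) := by
  obtain ⟨Φ₁, hΦ₁, hcard₁⟩ := exists_isFrameCode_ncard_eq_maxCDCSize (F := F) A Z δ
  obtain ⟨Φ₂, hΦ₂, hcard₂⟩ := exists_isFrameCode_ncard_eq_maxCDCSize (F := F) A X δ
  let σ : (Z × X × Y) ≃ₗ[F] X × Y × Z :=
    (LinearEquiv.prodComm F Z (X × Y)).trans (LinearEquiv.prodAssoc F X Y Z)
  let Ψ₁ := (fun φ => σ.toLinearMap ∘ₗ φ) '' Set.image2 LinearMap.prod Φ₁ D₁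
  let Ψ₂ := Set.image2 LinearMap.prod Φ₂ D₂
  have hΨ₁ : IsFrameCode δ Ψ₁ := (hΦ₁.image2_prod hD₁).image_comp σ.injective
  have hΨ₂ : IsFrameCode δ Ψ₂ := hΦ₂.image2_prod hD₂
  have hcross : ∀ φ ∈ Ψ₁, ∀ ψ ∈ Ψ₂,
      finrank F ↥(LinearMap.range φ ⊓ LinearMap.range ψ) + δ ≤ finrank F A := by
    rintro _ ⟨_, ⟨φ, hφ, g, _, rfl⟩, rfl⟩ _ ⟨ψ, hψ, h, hh, rfl⟩
    let π : X × Y × Z →ₗ[F] Z := LinearMap.snd F Y Z ∘ₗ LinearMap.snd F X (Y × Z)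
    have hinj : Function.Injective (π ∘ₗ σ.toLinearMap ∘ₗ φ.prod g) := hΦ₁.injective φ hφ
    have hinter := finrank_range_inf_range_add_finrank_ker_le hinj
      (hΨ₂.injective _ ⟨ψ, hψ, h, hh, rfl⟩)
    have hker : finrank F (LinearMap.ker h) ≤ finrank F (LinearMap.ker (π ∘ₗ ψ.prod h)) :=
      Submodule.finrank_mono (LinearMap.ker_le_ker_comp h (LinearMap.snd F Y Z))
    have := hrank h hh
    have := h.finrank_range_add_finrank_ker
    lia
  have : Finite (A →ₗ[F] X × Y × Z) := Module.finite_of_finite F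
  calc _ = Ψ₁.ncard + Ψ₂.ncard := by
        rw [Set.ncard_image_of_injective _ fun _ _ => (LinearMap.cancel_left σ.injective).1,
          ncard_image2_prod, ncard_image2_prod, hcard₁, hcard₂]
    _ = (Ψ₁ ∪ Ψ₂).ncard := (Set.ncard_union_eq (hΨ₁.disjoint hδ hcross)).symm
    _ ≤ _ := (hΨ₁.union hΨ₂ hcross).ncard_le_maxCDCSize hδ

end ConstantDimension

theorem two_parallel_linkage_lower_bound_t_general (F : Type*) [Field F] [Fintype F]
    {δ k n1 n2 t : ℕ} (hδ : 0 < δ) (hδk : δ ≤ k) (hn1 : k ≤ n1) (hn2 : k ≤ n2 + t) (ht : t ≤ n1) :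
    (Fintype.card F : ℚ) ^ (n1 * (k - δ + 1)) * maxCDCSize F n2 (2 * δ) k +
        maxCDCSize F (n1 - t) (2 * δ) k *
          (1 + ∑ r ∈ Finset.Icc δ (k - δ), mrdRankCount (Fintype.card F) k (n2 + t) δ r) ≤
      maxCDCSize F (n1 + n2) (2 * δ) k := by
  let A := Fin k → F
  let X := Fin (n1 - t) → F
  let Y := Fin t → F
  let Z := Fin n2 → F
  have hXY : finrank F (X × Y) = n1 := by simp [X, Y, ht]
  have hYZ : finrank F (Y × Z) = n2 + t := by simp [Y, Z, add_comm]
  have hXYZ : finrank F (X × Y × Z) = n1 + n2 := by simp [X, Y, Z]; lia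
  obtain ⟨C₁, hC₁⟩ : ∃ C : Submodule F (A →ₗ[F] X × Y), IsLinearMRD δ C :=
    exists_isLinearMRD hδ (by simpa [A]) (by simpa [A, hXY])
  obtain ⟨C₂, hC₂⟩ : ∃ C : Submodule F (A →ₗ[F] Y × Z), IsLinearMRD δ C :=
    exists_isLinearMRD hδ (by simpa [A]) (by simpa [A, hYZ])
  have hcard₁ : (C₁ : Set (A →ₗ[F] X × Y)).ncard = Fintype.card F ^ (n1 * (k - δ + 1)) := by
    rw [← Nat.card_coe_set_eq, SetLike.coe_sort_coe, Module.natCard_eq_pow_finrank (K := F),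
      Nat.card_eq_fintype_card, hC₁.finrank_eq, hXY, finrank_fin_fun]
  have hcard₂ := hC₂.ncard_finrank_range_le (k - δ)
  have hlink := parallel_linkage_le_maxCDCSize hδ hC₁.isRankMetricCode
    (hC₂.isRankMetricCode.mono (Set.sep_subset _ fun f => finrank F (LinearMap.range f) ≤ k - δ))
    fun g hg => by have := hg.2; simp only [A, finrank_fin_fun]; lia
  rw [hXYZ, hcard₁, finrank_fin_fun, finrank_fin_fun, finrank_fin_fun] at hlink
  rw [hYZ, finrank_fin_fun] at hcard₂
  rw [← hcard₂, mul_comm (_ ^ _)]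
  exact_mod_cast hlink

/-- For `k ≥ d`, `n1 ≥ k`, `n2 ≥ k`, `0 ≤ t ≤ n1 − k` (`d` even positive, `q` prime power),
`A_q(n1+n2, d, k) ≥ q^{n1(k−d/2+1)}·A_q(n2, d, k) + A_q(n1−t, d, k)·(1 + Σ_{r=d/2}^{k−d/2} A_r)`,
where `A_r` is the Delsarte rank-`r` count of a linear MRD code in `F_q^{k×(n2+t)}` with
minimum rank distance `d/2`. -/
theorem two_parallel_linkage_lower_bound_t (q d k n1 n2 t : ℕ) (hq : IsPrimePow q)
    (hd : 0 < d) (hdeven : Even d) (hkd : d ≤ k) (hn1 : k ≤ n1) (hn2 : k ≤ n2)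
    (ht : t ≤ n1 - k)
    (F : Type*) [Field F] [Fintype F] (hcard : Fintype.card F = q) :
    ((q : ℚ) ^ (n1 * (k - d / 2 + 1)) * (maxCDCSize F n2 d k : ℚ) +
        (maxCDCSize F (n1 - t) d k : ℚ) *
          (1 + ∑ r ∈ Finset.Icc (d / 2) (k - d / 2),
            gaussBinom q k r *
              ∑ i ∈ Finset.range (r - d / 2 + 1),
                (-1 : ℚ) ^ i * (q : ℚ) ^ (i * (i - 1) / 2) * gaussBinom q r i *
                  ((q : ℚ) ^ ((n2 + t) * (r - d / 2 + 1 - i)) - 1))) ≤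
      (maxCDCSize F (n1 + n2) d k : ℚ) := by
  obtain ⟨δ, rfl⟩ := even_iff_two_dvd.1 hdeven
  subst hcard
  rw [Nat.mul_div_cancel_left δ two_pos]
  exact two_parallel_linkage_lower_bound_t_general F (by lia) (by lia) hn1 (by lia) (by lia)
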